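/- Let n > k ≥ 1 be integers and let M > 0 be such that L_g ≤ M for every function g ∈ Q₀^{n−k}. Then for every log-concave upper semicontinuous probability density f : ℝⁿ → [0,∞) in isotropic position and every k-dimensional linear subspace H ⊆ ℝⁿ, one has ∫_H f dλ_H ≤ M^{n−k}. -/

import Mathlib

/-!
Integrate `f` over the translates of `H` to obtain its marginal `g` on `Hᗮ ≃ ℝ^(n-k)`, so that
`∫_H f = g 0 ≤ ‖g‖_∞`. By Fubini's theorem `g` inherits mass one, barycenter zero and identity
covariance, hence `‖g‖_∞ = L_g ^ (n-k) ≤ M ^ (n-k)` as soon as `g` lies in the class `Q₀`.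
Log-concavity of `g` is Prékopa's theorem, proved by induction on the dimension of the fibre from
the one-dimensional Prékopa-Leindler inequality. Upper semicontinuity of `g` is the reverse Fatou
lemma, whose dominating function exists because an integrable log-concave function with positive
integral decays exponentially.
-/

open MeasureTheory

noncomputable section

/-- `ℝⁿ` with its Euclidean structure. -/
abbrev Eucl (n : ℕ) := EuclideanSpace ℝ (Fin n)

/-- `f : ℝⁿ → [0,∞)` is log-concave:
`f(tx+(1−t)y) ≥ f(x)^t · f(y)^(1−t)` for all `x, y` and `t ∈ (0,1)`. -/
def IsLogConcave {n : ℕ} (f : Eucl n → ℝ) : Prop :=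
  ∀ x y : Eucl n, ∀ t : ℝ, 0 < t → t < 1 →
    f x ^ t * f y ^ (1 - t) ≤ f (t • x + (1 - t) • y)

/-- The class `Q₀ⁿ`: nonnegative, log-concave, upper semicontinuous, integrable
functions with positive integral. -/
def MemQ0 {n : ℕ} (f : Eucl n → ℝ) : Prop :=
  (∀ x, 0 ≤ f x) ∧ IsLogConcave f ∧ UpperSemicontinuous f ∧
    Integrable f ∧ 0 < ∫ x, f x

/-- `‖f‖_∞ = sup f`. -/
def supNorm {n : ℕ} (f : Eucl n → ℝ) : ℝ := ⨆ x, f x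

/-- `‖f‖_p = (∫ f^p)^(1/p)`. -/
def lpNorm {n : ℕ} (p : ℝ) (f : Eucl n → ℝ) : ℝ := (∫ x, f x ^ p) ^ (1 / p)

/-- `‖P_H f‖_{L¹(H)} = ∫_H sup_{z ∈ H⊥} f(y+z) dλ_H(y)`, the `L¹(H)`-norm of the
projection of `f` onto the subspace `H` (with the Lebesgue measure on `H` induced
by the Euclidean structure). -/
def projL1 {n : ℕ} (f : Eucl n → ℝ) (H : Submodule ℝ (Eucl n)) : ℝ :=
  ∫ y : H, ⨆ z : Hᗮ, f ((y : Eucl n) + (z : Eucl n))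

/-- `‖S_H f‖_{L¹(H)} = ∫_H f dλ_H`, the integral of the section `f|_H`. -/
def sectL1 {n : ℕ} (f : Eucl n → ℝ) (H : Submodule ℝ (Eucl n)) : ℝ :=
  ∫ y : H, f (y : Eucl n)

/-- The covariance matrix of the probability measure `‖g‖₁⁻¹ g(x) dx`:
`Cov(g)_{ij} = ‖g‖₁⁻¹ ∫ xᵢxⱼ g − bᵢbⱼ` with barycenter `b = ‖g‖₁⁻¹ ∫ x g(x) dx`. -/
def covMatrix {d : ℕ} (g : Eucl d → ℝ) : Matrix (Fin d) (Fin d) ℝ :=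
  Matrix.of fun i j =>
    (∫ x, g x * x i * x j) / (∫ x, g x) -
      ((∫ x, g x * x i) / ∫ x, g x) * ((∫ x, g x * x j) / ∫ x, g x)

/-- The isotropic constant `L_g = (‖g‖_∞/‖g‖₁)^{1/d} · (det Cov(g))^{1/(2d)}`. -/
def isoConst {d : ℕ} (g : Eucl d → ℝ) : ℝ :=
  (supNorm g / ∫ x, g x) ^ ((1 : ℝ) / d) *
    (covMatrix g).det ^ (1 / (2 * (d : ℝ)))

open scoped Pointwise

section PrekopaLeindler

theorem volume_add_volume_le_volume_add_of_isCompact {A B : Set ℝ} (hA : IsCompact A)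
    (hB : IsCompact B) (hA₀ : A.Nonempty) (hB₀ : B.Nonempty) :
    volume A + volume B ≤ volume (A + B) := by
  obtain ⟨a, haA, ha⟩ := hA.exists_isGreatest hA₀
  obtain ⟨b, hbB, hb⟩ := hB.exists_isLeast hB₀
  have inter_null : volume ((A + {b}) ∩ ({a} + B)) = 0 := by
    refine measure_mono_null ?_ (Real.volume_singleton (a := a + b))
    simp only [Set.add_singleton, Set.singleton_add]
    rintro _ ⟨⟨x, hx, rfl⟩, y, hy, hxy⟩
    have hxa : x ≤ a := ha hx
    have hby : b ≤ y := hb hy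
    simp only at hxy
    exact Set.mem_singleton_iff.2 (by linarith)
  calc volume A + volume B = volume (A + {b}) + volume ({a} + B) := by
        simp [Set.add_singleton, Set.singleton_add]
    _ = volume ((A + {b}) ∪ ({a} + B)) :=
        (measure_union₀ (isCompact_singleton.add hB).measurableSet.nullMeasurableSet
          inter_null).symm
    _ ≤ volume (A + B) := measure_mono <| Set.union_subset
        (Set.add_subset_add_left (Set.singleton_subset_iff.2 hbB))
        (Set.add_subset_add_right (Set.singleton_subset_iff.2 haA))

theorem volume_add_volume_le_volume_add {A B : Set ℝ} (hA : MeasurableSet A)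
    (hB : MeasurableSet B) (hA₀ : A.Nonempty) (hB₀ : B.Nonempty) :
    volume A + volume B ≤ volume (A + B) := by
  obtain ⟨a, ha⟩ := hA₀
  obtain ⟨b, hb⟩ := hB₀
  rw [hA.measure_eq_iSup_isCompact, hB.measure_eq_iSup_isCompact]
  simp only [iSup_and']
  refine ENNReal.biSup_add_biSup_le' ⟨∅, A.empty_subset, isCompact_empty⟩
    ⟨∅, B.empty_subset, isCompact_empty⟩ fun K ⟨hKA, hK⟩ L ⟨hLB, hL⟩ => ?_
  calc volume K + volume L ≤ volume (insert a K) + volume (insert b L) :=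
        add_le_add (measure_mono (Set.subset_insert a K)) (measure_mono (Set.subset_insert b L))
    _ ≤ volume (insert a K + insert b L) :=
        volume_add_volume_le_volume_add_of_isCompact (hK.insert a) (hL.insert b)
          (Set.insert_nonempty a K) (Set.insert_nonempty b L)
    _ ≤ volume (A + B) :=
        measure_mono (Set.add_subset_add (Set.insert_subset ha hKA) (Set.insert_subset hb hLB))

theorem ofReal_integral_eq_lintegral_meas_lt {α : Type*} [MeasurableSpace α] {μ : Measure α}
    {f : α → ℝ} (hf : Integrable f μ) (hf₀ : ∀ x, 0 ≤ f x) :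
    ENNReal.ofReal (∫ x, f x ∂μ) = ∫⁻ s in Set.Ioi 0, μ {x | s < f x} := by
  rw [ofReal_integral_eq_lintegral_ofReal hf (.of_forall hf₀),
    lintegral_eq_lintegral_meas_lt μ (.of_forall hf₀) hf.aemeasurable]

/-- Both suprema being `1`, the superlevel sets of `u` and `v` are nonempty at the same levels
`s < 1`, so that the one-dimensional Brunn-Minkowski inequality is available at every level. -/
theorem weighted_volume_superlevel_le {u v w : ℝ → ℝ} {a b s : ℝ} (hu : Measurable u)
    (hv : Measurable v) (hu₁ : IsLUB (Set.range u) 1) (hv₁ : IsLUB (Set.range v) 1)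
    (ha : 0 < a) (hb : 0 < b) (hab : a + b = 1)
    (h : ∀ x y, u x ^ a * v y ^ b ≤ w (a * x + b * y)) (hs : 0 < s) :
    ENNReal.ofReal a * volume {x | s < u x} + ENNReal.ofReal b * volume {x | s < v x} ≤
      volume {x | s < w x} := by
  rcases le_or_gt 1 s with hs₁ | hs₁
  · have empty_of_isLUB {g : ℝ → ℝ} (hg : IsLUB (Set.range g) 1) : {x | s < g x} = ∅ :=
      Set.eq_empty_of_forall_notMem fun x hx =>
        (hs₁.trans_lt hx).not_ge (hg.1 (Set.mem_range_self x))
    simp [empty_of_isLUB hu₁, empty_of_isLUB hv₁]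
  have nonempty_of_isLUB {g : ℝ → ℝ} (hg : IsLUB (Set.range g) 1) : {x | s < g x}.Nonempty := by
    obtain ⟨_, ⟨x, rfl⟩, hx⟩ := (lt_isLUB_iff hg).1 hs₁
    exact ⟨x, hx⟩
  have volume_smul {c : ℝ} (hc : 0 < c) (A : Set ℝ) :
      volume (c • A) = ENNReal.ofReal c * volume A := by
    rw [Measure.addHaar_smul, Module.finrank_self, pow_one, abs_of_pos hc]
  have hsub : a • {x | s < u x} + b • {x | s < v x} ⊆ {x | s < w x} := by
    rintro _ ⟨_, ⟨x, hx, rfl⟩, _, ⟨y, hy, rfl⟩, rfl⟩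
    have hx : s < u x := hx
    calc s = s ^ a * s ^ b := by rw [← Real.rpow_add hs, hab, Real.rpow_one]
      _ < u x ^ a * v y ^ b :=
          mul_lt_mul'' (Real.rpow_lt_rpow hs.le hx ha) (Real.rpow_lt_rpow hs.le hy hb)
            (by positivity) (by positivity)
      _ ≤ w (a * x + b * y) := h x y
  rw [← volume_smul ha, ← volume_smul hb]
  exact (volume_add_volume_le_volume_add ((measurableSet_lt measurable_const hu).const_smul₀ a)
    ((measurableSet_lt measurable_const hv).const_smul₀ b) (nonempty_of_isLUB hu₁).smul_set
    (nonempty_of_isLUB hv₁).smul_set).trans (measure_mono hsub)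

theorem weighted_integral_le_of_isLUB_one {u v w : ℝ → ℝ} {a b : ℝ} (hu : Measurable u)
    (hv : Measurable v) (hu_int : Integrable u) (hv_int : Integrable v) (hw_int : Integrable w)
    (hu₀ : ∀ x, 0 ≤ u x) (hv₀ : ∀ x, 0 ≤ v x) (hw₀ : ∀ x, 0 ≤ w x)
    (hu₁ : IsLUB (Set.range u) 1) (hv₁ : IsLUB (Set.range v) 1)
    (ha : 0 < a) (hb : 0 < b) (hab : a + b = 1)
    (h : ∀ x y, u x ^ a * v y ^ b ≤ w (a * x + b * y)) :
    a * (∫ x, u x) + b * (∫ x, v x) ≤ ∫ x, w x := by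
  have iu : 0 ≤ ∫ x, u x := integral_nonneg hu₀
  have iv : 0 ≤ ∫ x, v x := integral_nonneg hv₀
  rw [← ENNReal.ofReal_le_ofReal_iff (integral_nonneg hw₀),
    ENNReal.ofReal_add (by positivity) (by positivity), ENNReal.ofReal_mul ha.le,
    ENNReal.ofReal_mul hb.le, ofReal_integral_eq_lintegral_meas_lt hu_int hu₀,
    ofReal_integral_eq_lintegral_meas_lt hv_int hv₀,
    ofReal_integral_eq_lintegral_meas_lt hw_int hw₀,
    ← lintegral_const_mul' _ _ ENNReal.ofReal_ne_top,
    ← lintegral_const_mul' _ _ ENNReal.ofReal_ne_top]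
  exact (le_lintegral_add _ _).trans <| setLIntegral_mono' measurableSet_Ioi fun s hs =>
    weighted_volume_superlevel_le hu hv hu₁ hv₁ ha hb hab h hs

theorem isLUB_range_div_iSup {ι : Type*} [Nonempty ι] {g : ι → ℝ} (hg : BddAbove (Set.range g))
    (hg_pos : 0 < ⨆ i, g i) : IsLUB (Set.range fun i => g i / ⨆ j, g j) 1 := by
  refine isLUB_iff_le_iff.2 fun c => ?_
  simp only [mem_upperBounds, Set.forall_mem_range, div_le_iff₀ hg_pos]
  rw [← ciSup_le_iff hg, le_mul_iff_one_le_left hg_pos]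

theorem prekopa_leindler_real {u v w : ℝ → ℝ} {a b : ℝ} (hu : Measurable u) (hv : Measurable v)
    (hu_int : Integrable u) (hv_int : Integrable v) (hw_int : Integrable w)
    (hu₀ : ∀ x, 0 ≤ u x) (hv₀ : ∀ x, 0 ≤ v x) (hw₀ : ∀ x, 0 ≤ w x)
    (hu_bdd : BddAbove (Set.range u)) (hv_bdd : BddAbove (Set.range v))
    (ha : 0 < a) (hb : 0 < b) (hab : a + b = 1)
    (h : ∀ x y, u x ^ a * v y ^ b ≤ w (a * x + b * y)) :
    (∫ x, u x) ^ a * (∫ x, v x) ^ b ≤ ∫ x, w x := by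
  have iSup_pos_or {g : ℝ → ℝ} (hg₀ : ∀ x, 0 ≤ g x) (hg : BddAbove (Set.range g)) :
      (∀ x, g x = 0) ∨ 0 < ⨆ x, g x := by
    refine or_iff_not_imp_left.2 fun hne => ?_
    obtain ⟨x, hx⟩ := not_forall.1 hne
    exact ((hg₀ x).lt_of_ne' hx).trans_le (le_ciSup hg x)
  rcases iSup_pos_or hu₀ hu_bdd with hu_zero | hU
  · simpa [hu_zero, Real.zero_rpow ha.ne'] using integral_nonneg hw₀
  rcases iSup_pos_or hv₀ hv_bdd with hv_zero | hV
  · simpa [hv_zero, Real.zero_rpow hb.ne'] using integral_nonneg hw₀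
  set U := ⨆ x, u x
  set V := ⨆ x, v x
  have hW : 0 < U ^ a * V ^ b := by positivity
  have arith : a * (∫ x, u x / U) + b * (∫ x, v x / V) ≤ ∫ x, w x / (U ^ a * V ^ b) := by
    refine weighted_integral_le_of_isLUB_one (hu.div_const U) (hv.div_const V)
      (hu_int.div_const U) (hv_int.div_const V) (hw_int.div_const _)
      (fun x => div_nonneg (hu₀ x) hU.le) (fun x => div_nonneg (hv₀ x) hV.le)
      (fun x => div_nonneg (hw₀ x) hW.le) (isLUB_range_div_iSup hu_bdd hU)
      (isLUB_range_div_iSup hv_bdd hV) ha hb hab fun x y => ?_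
    rw [Real.div_rpow (hu₀ x) hU.le, Real.div_rpow (hv₀ y) hV.le, div_mul_div_comm]
    exact div_le_div_of_nonneg_right (h x y) hW.le
  have quotient_le : (∫ x, u x / U) ^ a * (∫ x, v x / V) ^ b ≤ ∫ x, w x / (U ^ a * V ^ b) :=
    (Real.geom_mean_le_arith_mean2_weighted ha.le hb.le
      (integral_nonneg fun x => div_nonneg (hu₀ x) hU.le)
      (integral_nonneg fun x => div_nonneg (hv₀ x) hV.le) hab).trans arith
  rwa [integral_div, integral_div, integral_div, Real.div_rpow (integral_nonneg hu₀) hU.le,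
    Real.div_rpow (integral_nonneg hv₀) hV.le, div_mul_div_comm,
    div_le_div_iff_of_pos_right hW] at quotient_le

end PrekopaLeindler

section LogConcave

/-- Log-concavity on an arbitrary real vector space, with two weights `a + b = 1` in place of
`t` and `1 - t`. -/
def LogConcave {E : Type*} [AddCommGroup E] [Module ℝ E] (f : E → ℝ) : Prop :=
  ∀ ⦃x y : E⦄ ⦃a b : ℝ⦄, 0 < a → 0 < b → a + b = 1 → f x ^ a * f y ^ b ≤ f (a • x + b • y)

theorem isLogConcave_iff_logConcave {n : ℕ} {f : Eucl n → ℝ} : IsLogConcave f ↔ LogConcave f := by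
  refine ⟨fun h x y a b ha hb hab => ?_, fun h x y t ht₀ ht₁ =>
    h ht₀ (sub_pos.2 ht₁) (add_sub_cancel t 1)⟩
  obtain rfl : b = 1 - a := eq_sub_of_add_eq' hab
  exact h x y a ha (sub_pos.1 hb)

theorem LogConcave.const_mul {E : Type*} [AddCommGroup E] [Module ℝ E] {f : E → ℝ}
    (hf : LogConcave f) (hf₀ : ∀ x, 0 ≤ f x) {c : ℝ} (hc : 0 < c) :
    LogConcave fun x => c * f x := fun x y a b ha hb hab => by
  calc (c * f x) ^ a * (c * f y) ^ b = (c ^ a * c ^ b) * (f x ^ a * f y ^ b) := by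
        rw [Real.mul_rpow hc.le (hf₀ x), Real.mul_rpow hc.le (hf₀ y), mul_mul_mul_comm]
    _ = c * (f x ^ a * f y ^ b) := by rw [← Real.rpow_add hc, hab, Real.rpow_one]
    _ ≤ c * f (a • x + b • y) := mul_le_mul_of_nonneg_left (hf ha hb hab) hc.le

theorem LogConcave.comp_linearMap {E E' : Type*} [AddCommGroup E] [Module ℝ E] [AddCommGroup E']
    [Module ℝ E'] {f : E → ℝ} (hf : LogConcave f) (L : E' →ₗ[ℝ] E) :
    LogConcave fun x => f (L x) := fun x y a b ha hb hab => by
  simpa only [map_add, map_smul] using hf (x := L x) (y := L y) ha hb hab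

theorem LogConcave.convex_superlevel {E : Type*} [AddCommGroup E] [Module ℝ E] {f : E → ℝ}
    (hf : LogConcave f) {c : ℝ} (hc : 0 < c) : Convex ℝ {x | c ≤ f x} := by
  refine convex_iff_forall_pos.2 fun x hx y hy a b ha hb hab => ?_
  calc c = c ^ a * c ^ b := by rw [← Real.rpow_add hc, hab, Real.rpow_one]
    _ ≤ f x ^ a * f y ^ b := mul_le_mul (Real.rpow_le_rpow hc.le hx ha.le)
        (Real.rpow_le_rpow hc.le hy hb.le) (by positivity)
        (Real.rpow_nonneg (hc.le.trans hx) a)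
    _ ≤ f (a • x + b • y) := hf ha hb hab

end LogConcave

section ExponentialDecay

/-- `f` is bounded above by a multiple of `exp (-b‖x‖)` for some rate `b > 0`. -/
def HasExpDecay {E : Type*} [Norm E] (f : E → ℝ) : Prop :=
  ∃ C b : ℝ, 0 < b ∧ ∀ x, f x ≤ C * Real.exp (-(b * ‖x‖))

theorem exists_pow_mul_exp_neg_le (m : ℕ) {b : ℝ} (hb : 0 < b) :
    ∃ C : ℝ, ∀ r : ℝ, 0 ≤ r → (1 + r) ^ m * Real.exp (-(b * r)) ≤ C := by
  refine ⟨m.factorial * Real.exp b / b ^ m, fun r hr => ?_⟩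
  have taylor := Real.pow_div_factorial_le_exp (b * (1 + r)) (by positivity) m
  rw [mul_pow, mul_add, mul_one, Real.exp_add, div_le_iff₀ (by positivity)] at taylor
  rw [Real.exp_neg, ← div_eq_mul_inv, div_le_div_iff₀ (Real.exp_pos _) (by positivity)]
  linarith

theorem HasExpDecay.exists_pow_mul_le {E : Type*} [SeminormedAddGroup E] {f : E → ℝ}
    (hf : HasExpDecay f) (hf₀ : ∀ x, 0 ≤ f x) (m : ℕ) : ∃ C : ℝ, ∀ x, (1 + ‖x‖) ^ m * f x ≤ C := by
  obtain ⟨C, b, hb, hC⟩ := hf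
  obtain ⟨D, hD⟩ := exists_pow_mul_exp_neg_le m hb
  have C_nonneg : 0 ≤ C := by simpa using (hf₀ 0).trans (hC 0)
  refine ⟨C * D, fun x => ?_⟩
  calc (1 + ‖x‖) ^ m * f x ≤ (1 + ‖x‖) ^ m * (C * Real.exp (-(b * ‖x‖))) := by
        gcongr; exact hC x
    _ = C * ((1 + ‖x‖) ^ m * Real.exp (-(b * ‖x‖))) := by ring
    _ ≤ C * D := by gcongr; exact hD _ (norm_nonneg x)

theorem HasExpDecay.integrable_mul {E : Type*} [NormedAddCommGroup E] [NormedSpace ℝ E]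
    [MeasurableSpace E] [BorelSpace E] {μ : Measure E} [μ.HasTemperateGrowth]
    {f p : E → ℝ} (hf : HasExpDecay f) (hf₀ : ∀ x, 0 ≤ f x)
    (hf_meas : AEStronglyMeasurable f μ) (hp : p.HasTemperateGrowth) :
    Integrable (fun x => f x * p x) μ := by
  obtain ⟨k, D, hD⟩ := hp.2 0
  have D_nonneg : 0 ≤ D := by simpa using (norm_nonneg _).trans (hD 0)
  obtain ⟨C, hC⟩ := hf.exists_pow_mul_le hf₀ (k + μ.integrablePower)
  refine ((Measure.integrable_pow_neg_integrablePower μ).const_mul (D * C)).mono'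
    (hf_meas.mul hp.1.continuous.aestronglyMeasurable) (.of_forall fun x => ?_)
  have hpx : ‖p x‖ ≤ D * (1 + ‖x‖) ^ k := by simpa using hD x
  rw [norm_mul, Real.norm_of_nonneg (hf₀ x), Real.rpow_neg (by positivity), Real.rpow_natCast,
    ← div_eq_mul_inv, le_div_iff₀ (by positivity)]
  calc f x * ‖p x‖ * (1 + ‖x‖) ^ μ.integrablePower
      ≤ f x * (D * (1 + ‖x‖) ^ k) * (1 + ‖x‖) ^ μ.integrablePower := by
        gcongr; exact hf₀ x
    _ = D * ((1 + ‖x‖) ^ (k + μ.integrablePower) * f x) := by rw [pow_add]; ring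
    _ ≤ D * C := by gcongr; exact hC x

theorem HasExpDecay.integrable {E : Type*} [NormedAddCommGroup E] [NormedSpace ℝ E]
    [MeasurableSpace E] [BorelSpace E] {μ : Measure E} [μ.HasTemperateGrowth]
    {f : E → ℝ} (hf : HasExpDecay f) (hf₀ : ∀ x, 0 ≤ f x) (hf_meas : AEStronglyMeasurable f μ) :
    Integrable f μ := by
  simpa using hf.integrable_mul hf₀ hf_meas (.const (1 : ℝ))

theorem integrable_exp_neg_mul_norm {E : Type*} [NormedAddCommGroup E] [NormedSpace ℝ E]
    [MeasurableSpace E] [BorelSpace E] {μ : Measure E} [μ.HasTemperateGrowth]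
    {b : ℝ} (hb : 0 < b) : Integrable (fun x : E => Real.exp (-(b * ‖x‖))) μ :=
  HasExpDecay.integrable ⟨1, b, hb, fun x => (one_mul _).ge⟩ (fun x => (Real.exp_pos _).le)
    (by fun_prop : Continuous fun x : E => Real.exp (-(b * ‖x‖))).aestronglyMeasurable

theorem HasExpDecay.comp {E E' : Type*} [SeminormedAddGroup E] [Norm E'] {f : E → ℝ}
    (hf : HasExpDecay f) (hf₀ : ∀ x, 0 ≤ f x) {g : E' → E} {K : ℝ}
    (hg : ∀ x, ‖x‖ ≤ K * ‖g x‖) : HasExpDecay fun x => f (g x) := by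
  obtain ⟨C, b, hb, hC⟩ := hf
  have C_nonneg : 0 ≤ C := by simpa using (hf₀ 0).trans (hC 0)
  have hK : 0 < max K 1 := lt_max_of_lt_right one_pos
  refine ⟨C, b / max K 1, by positivity, fun x => (hC (g x)).trans ?_⟩
  rw [div_mul_eq_mul_div, mul_div_assoc]
  gcongr
  exact (div_le_iff₀' hK).2 ((hg x).trans (by gcongr; exact le_max_left K 1))

theorem HasExpDecay.of_le_exp_dist {E : Type*} [SeminormedAddCommGroup E] {f : E → ℝ} {x₀ : E}
    {C b : ℝ} (hC₀ : 0 ≤ C) (hb : 0 < b) (hC : ∀ x, f x ≤ C * Real.exp (-(b * dist x x₀))) :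
    HasExpDecay f := by
  refine ⟨C * Real.exp (b * ‖x₀‖), b, hb, fun x => (hC x).trans ?_⟩
  rw [mul_assoc, ← Real.exp_add]
  have := norm_sub_norm_le x x₀
  gcongr
  rw [dist_eq_norm]
  nlinarith

theorem ball_midpoint_subset_of_convex {E : Type*} [NormedAddCommGroup E] [NormedSpace ℝ E]
    {s : Set E} (hs : Convex ℝ s) {x p : E} {r : ℝ} (hball : Metric.ball x r ⊆ s) (hp : p ∈ s) :
    Metric.ball (midpoint ℝ x p) (r / 2) ⊆ s := fun z hz => by
  have reflection_mem : (2 : ℝ) • z - p ∈ s := hball <| by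
    rw [Metric.mem_ball, dist_eq_norm] at hz ⊢
    have : (2 : ℝ) • z - p - x = (2 : ℝ) • (z - midpoint ℝ x p) := by
      rw [midpoint_eq_smul_add, smul_sub, smul_smul, mul_invOf_self, one_smul]
      abel
    rw [this, norm_smul, Real.norm_two]
    linarith
  have := hs.midpoint_mem reflection_mem hp
  rwa [midpoint_eq_smul_add, sub_add_cancel, smul_smul, invOf_mul_self, one_smul] at this

/-- All but a small part of the mass of `s` lies in a compact set `K`. By convexity a point of `s`
far from `K` forces a ball of fixed radius into `s \ K`, which has too much mass. -/
theorem isBounded_of_convex_of_measure_ne_top {E : Type*} [NormedAddCommGroup E] [NormedSpace ℝ E]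
    [FiniteDimensional ℝ E] [MeasurableSpace E] [BorelSpace E] {μ : Measure E}
    [μ.IsAddHaarMeasure] {s : Set E} (hs : Convex ℝ s) (hs_int : (interior s).Nonempty)
    (hs_fin : μ s ≠ ⊤) : Bornology.IsBounded s := by
  obtain ⟨x₀, hx₀⟩ := hs_int
  obtain ⟨r, hr, hball⟩ := Metric.isOpen_iff.1 isOpen_interior x₀ hx₀
  have : IsFiniteMeasure (μ.restrict s) := isFiniteMeasure_restrict.2 hs_fin
  set ε := μ (Metric.ball (0 : E) (r / 2))
  have hε : ε ≠ 0 := (Metric.measure_ball_pos μ 0 (by positivity)).ne'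
  obtain ⟨K, hK, hKε⟩ := isTightMeasureSet_iff_exists_isCompact_measure_compl_le.1
    (isTightMeasureSet_singleton (μ := μ.restrict s)) _ (ENNReal.half_pos hε)
  obtain ⟨R, hKR⟩ := hK.isBounded.subset_closedBall x₀
  refine (Metric.isBounded_iff_subset_closedBall x₀).2 ⟨2 * (R + r), fun p hp => ?_⟩
  by_contra hpR
  set q := midpoint ℝ x₀ p
  have ball_subset : Metric.ball q (r / 2) ⊆ s :=
    ball_midpoint_subset_of_convex hs (hball.trans interior_subset) hp
  have ball_disjoint : Metric.ball q (r / 2) ⊆ Kᶜ := fun z hz hzK => by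
    have hq : dist q x₀ = dist p x₀ / 2 := by
      rw [dist_midpoint_left, Real.norm_two, dist_comm x₀ p, inv_mul_eq_div]
    have := dist_triangle_left q x₀ z
    have := Metric.mem_closedBall.1 (hKR hzK)
    rw [Metric.mem_ball] at hz
    rw [Metric.mem_closedBall, not_le] at hpR
    linarith
  refine (ENNReal.half_lt_self hε measure_ball_lt_top.ne).not_ge ?_
  calc ε = μ (Metric.ball q (r / 2)) := (Measure.addHaar_ball_center μ q _).symm
    _ = μ.restrict s (Metric.ball q (r / 2)) := by
        rw [Measure.restrict_apply Metric.isOpen_ball.measurableSet,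
          Set.inter_eq_left.2 ball_subset]
    _ ≤ μ.restrict s Kᶜ := measure_mono ball_disjoint
    _ ≤ ε / 2 := hKε _ rfl

end ExponentialDecay

section LogConcaveDecay

theorem LogConcave.exists_interior_superlevel_nonempty {E : Type*} [NormedAddCommGroup E]
    [NormedSpace ℝ E] [FiniteDimensional ℝ E] [MeasurableSpace E] [BorelSpace E] {μ : Measure E}
    [μ.IsAddHaarMeasure] {f : E → ℝ} (hf : LogConcave f) (hf₀ : ∀ x, 0 ≤ f x)
    (hf_int : Integrable f μ) (hf_pos : 0 < ∫ x, f x ∂μ) :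
    ∃ c > 0, (interior {x | c ≤ f x}).Nonempty := by
  by_contra! h
  have level_null : ∀ c > 0, μ {x | c ≤ f x} = 0 := fun c hc => by
    refine measure_mono_null ?_ ((hf.convex_superlevel hc).addHaar_frontier μ)
    rw [frontier, h c hc, Set.sdiff_empty]
    exact subset_closure
  rw [hf_int.integral_eq_integral_meas_le (.of_forall hf₀),
    setIntegral_eq_zero_of_forall_eq_zero fun c hc => by
      rw [measureReal_def, level_null c hc, ENNReal.toReal_zero]] at hf_pos
  exact hf_pos.false

theorem LogConcave.le_mul_exp_of_le_mul_exp_neg_one {E : Type*} [SeminormedAddCommGroup E]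
    [NormedSpace ℝ E] {f : E → ℝ} (hf : LogConcave f) (hf₀ : ∀ x, 0 ≤ f x) {x₀ : E} {c R : ℝ}
    (hc : 0 < c) (hR : 0 < R) (hx₀ : c ≤ f x₀)
    (h : ∀ x, R ≤ dist x x₀ → f x ≤ c * Real.exp (-1)) {x : E} (hx : R ≤ dist x x₀) :
    f x ≤ c * Real.exp (-(R⁻¹ * dist x x₀)) := by
  rcases hx.eq_or_lt with hx | hx
  · rw [← hx, inv_mul_cancel₀ hR.ne']
    exact h x hx.le
  have hd : 0 < dist x x₀ := hR.trans hx
  set a := R / dist x x₀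
  have ha : 0 < a := div_pos hR hd
  have hb : 0 < 1 - a := sub_pos.2 ((div_lt_one hd).2 hx)
  have dist_point : dist (a • x + (1 - a) • x₀) x₀ = R := by
    have : a • x + (1 - a) • x₀ - x₀ = a • (x - x₀) := by module
    rw [dist_eq_norm, this, norm_smul, ← dist_eq_norm, Real.norm_of_nonneg ha.le,
      div_mul_cancel₀ R hd.ne']
  rw [← Real.rpow_le_rpow_iff (hf₀ x) (by positivity) ha]
  refine le_of_mul_le_mul_right ?_ (Real.rpow_pos_of_pos hc (1 - a))
  calc f x ^ a * c ^ (1 - a) ≤ f x ^ a * f x₀ ^ (1 - a) := by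
        gcongr
        exact Real.rpow_nonneg (hf₀ x) a
    _ ≤ f (a • x + (1 - a) • x₀) := hf ha hb (add_sub_cancel a 1)
    _ ≤ c * Real.exp (-1) := h _ dist_point.ge
    _ = (c * Real.exp (-(R⁻¹ * dist x x₀))) ^ a * c ^ (1 - a) := by
        have : R⁻¹ * dist x x₀ * a = 1 := by
          rw [mul_assoc, mul_div_cancel₀ R hd.ne', inv_mul_cancel₀ hR.ne']
        rw [Real.mul_rpow hc.le (Real.exp_pos _).le, ← Real.exp_mul, neg_mul, this, mul_right_comm,
          ← Real.rpow_add hc, add_sub_cancel, Real.rpow_one]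

theorem LogConcave.hasExpDecay {E : Type*} [NormedAddCommGroup E] [NormedSpace ℝ E]
    [FiniteDimensional ℝ E] [MeasurableSpace E] [BorelSpace E] {μ : Measure E}
    [μ.IsAddHaarMeasure] {f : E → ℝ} (hf : LogConcave f) (hf₀ : ∀ x, 0 ≤ f x)
    (hf_usc : UpperSemicontinuous f) (hf_int : Integrable f μ) (hf_pos : 0 < ∫ x, f x ∂μ) :
    HasExpDecay f := by
  have : ProperSpace E := FiniteDimensional.proper_real E
  obtain ⟨c, hc, x₀, hx₀⟩ := hf.exists_interior_superlevel_nonempty hf₀ hf_int hf_pos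
  have hcx₀ : c ≤ f x₀ := interior_subset (s := {x | c ≤ f x}) hx₀
  have hc' : c * Real.exp (-1) ≤ c := by
    rw [mul_le_iff_le_one_right hc, Real.exp_le_one_iff]
    norm_num
  have level_bounded : Bornology.IsBounded {x | c * Real.exp (-1) ≤ f x} :=
    isBounded_of_convex_of_measure_ne_top (hf.convex_superlevel (by positivity))
      ⟨x₀, interior_mono (fun x hx => hc'.trans hx) hx₀⟩
      (hf_int.measure_ge_lt_top (by positivity)).ne
  obtain ⟨R, hR, hlevel⟩ := level_bounded.subset_ball_lt 0 x₀
  obtain ⟨B, hB⟩ :=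
    (hf_usc.upperSemicontinuousOn _).bddAbove_of_isCompact (isCompact_closedBall x₀ R)
  have hB_ball : ∀ x, dist x x₀ ≤ R → f x ≤ B := fun x hx => hB ⟨x, hx, rfl⟩
  have hfar : ∀ x, R ≤ dist x x₀ → f x ≤ c * Real.exp (-1) := fun x hx =>
    (not_le.1 fun h => hx.not_gt (hlevel h)).le
  refine .of_le_exp_dist (x₀ := x₀) (C := max c (B * Real.exp 1)) (le_max_of_le_left hc.le)
    (inv_pos.2 hR) fun x => ?_
  rcases le_total R (dist x x₀) with hx | hx
  · refine (hf.le_mul_exp_of_le_mul_exp_neg_one hf₀ hc hR hcx₀ hfar hx).trans ?_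
    gcongr
    exact le_max_left _ _
  · have : 0 ≤ B := (hf₀ x).trans (hB_ball x hx)
    calc f x ≤ B * Real.exp 1 * Real.exp (-1) := by
          rw [mul_assoc, ← Real.exp_add, add_neg_cancel, Real.exp_zero, mul_one]
          exact hB_ball x hx
      _ ≤ max c (B * Real.exp 1) * Real.exp (-(R⁻¹ * dist x x₀)) := by
          gcongr
          · exact le_max_right _ _
          · exact inv_mul_le_one_of_le₀ hx hR.le

end LogConcaveDecay

section ParametricIntegral

theorem upperSemicontinuous_lintegral_of_le {X Z : Type*} [TopologicalSpace X]
    [FirstCountableTopology X] [MeasurableSpace Z] {μ : Measure Z} {F : X → Z → ENNReal}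
    {g : Z → ENNReal} (hF_meas : ∀ x, Measurable (F x))
    (hF_usc : ∀ z, UpperSemicontinuous fun x => F x z) (hFg : ∀ x z, F x z ≤ g z)
    (hg : ∫⁻ z, g z ∂μ ≠ ⊤) : UpperSemicontinuous fun x => ∫⁻ z, F x z ∂μ := by
  intro x c hc
  by_contra h
  obtain ⟨u, hu, hcu⟩ := Filter.exists_seq_forall_of_frequently (Filter.not_eventually.1 h)
  refine hc.not_ge ?_
  calc c ≤ Filter.limsup (fun n => ∫⁻ z, F (u n) z ∂μ) Filter.atTop :=
        Filter.le_limsup_of_frequently_le (.of_forall fun n => not_lt.1 (hcu n))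
    _ ≤ ∫⁻ z, Filter.limsup (fun n => F (u n) z) Filter.atTop ∂μ :=
        limsup_lintegral_le g (fun n => hF_meas (u n)) (fun n => .of_forall (hFg (u n))) hg
    _ ≤ ∫⁻ z, F x z ∂μ := lintegral_mono fun z =>
        (Filter.limsup_le_limsup_of_le hu).trans
          (upperSemicontinuousAt_iff_limsup_le.1 (hF_usc z x))

theorem upperSemicontinuous_integral_of_le {X Z : Type*} [TopologicalSpace X]
    [FirstCountableTopology X] [MeasurableSpace Z] {μ : Measure Z} {F : X → Z → ℝ} {g : Z → ℝ}
    (hF_meas : ∀ x, Measurable (F x)) (hF_usc : ∀ z, UpperSemicontinuous fun x => F x z)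
    (hF₀ : ∀ x z, 0 ≤ F x z) (hFg : ∀ x z, F x z ≤ g z) (hg : Integrable g μ) :
    UpperSemicontinuous fun x => ∫ z, F x z ∂μ := by
  have hlint : UpperSemicontinuous fun x => ∫⁻ z, ENNReal.ofReal (F x z) ∂μ :=
    upperSemicontinuous_lintegral_of_le (fun x => (hF_meas x).ennreal_ofReal)
      (fun z => ENNReal.continuous_ofReal.comp_upperSemicontinuous (hF_usc z)
        ENNReal.ofReal_mono) (fun x z => ENNReal.ofReal_le_ofReal (hFg x z)) hg.lintegral_lt_top.ne
  have hF_int : ∀ x, Integrable (F x) μ := fun x =>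
    hg.mono' (hF_meas x).aestronglyMeasurable (.of_forall fun z => by
      rw [Real.norm_of_nonneg (hF₀ x z)]
      exact hFg x z)
  have ofReal_integral : ∀ x, ENNReal.ofReal (∫ z, F x z ∂μ) = ∫⁻ z, ENNReal.ofReal (F x z) ∂μ :=
    fun x => ofReal_integral_eq_lintegral_ofReal (hF_int x) (.of_forall (hF₀ x))
  intro x c hc
  have c_pos : 0 < c := (integral_nonneg (hF₀ x)).trans_lt hc
  have hlt : ∫⁻ z, ENNReal.ofReal (F x z) ∂μ < ENNReal.ofReal c := by
    rwa [← ofReal_integral, ENNReal.ofReal_lt_ofReal_iff c_pos]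
  filter_upwards [hlint x _ hlt] with y hy
  rwa [← ofReal_integral, ENNReal.ofReal_lt_ofReal_iff c_pos] at hy

end ParametricIntegral

/-- Nonnegative upper semicontinuous log-concave functions that decay exponentially. By
`LogConcave.hasExpDecay` these are the functions of `Q₀` together with some functions of integral
zero, and unlike `Q₀` the class is visibly stable under marginals, because decay in norm supplies a
dominating function. -/
structure DecayingLogConcave {E : Type*} [NormedAddCommGroup E] [NormedSpace ℝ E] (f : E → ℝ) :
    Prop where
  nonneg : ∀ x, 0 ≤ f x
  logConcave : LogConcave f
  upperSemicontinuous : UpperSemicontinuous f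
  hasExpDecay : HasExpDecay f

namespace DecayingLogConcave

section Basic

variable {E : Type*} [NormedAddCommGroup E] [NormedSpace ℝ E] {f : E → ℝ}

theorem bddAbove_range (hf : DecayingLogConcave f) : BddAbove (Set.range f) := by
  obtain ⟨C, hC⟩ := hf.hasExpDecay.exists_pow_mul_le hf.nonneg 0
  exact ⟨C, Set.forall_mem_range.2 fun x => by simpa using hC x⟩

theorem comp (hf : DecayingLogConcave f) {E' : Type*} [NormedAddCommGroup E'] [NormedSpace ℝ E']
    (L : E' →L[ℝ] E) {K : NNReal} (hL : AntilipschitzWith K L) :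
    DecayingLogConcave fun x => f (L x) where
  nonneg x := hf.nonneg (L x)
  logConcave := hf.logConcave.comp_linearMap L.toLinearMap
  upperSemicontinuous := hf.upperSemicontinuous.comp L.continuous
  hasExpDecay := hf.hasExpDecay.comp hf.nonneg fun x => by
    simpa only [map_zero, dist_zero_right] using hL.le_mul_dist x 0

variable [MeasurableSpace E] [BorelSpace E]

theorem measurable (hf : DecayingLogConcave f) : Measurable f :=
  hf.upperSemicontinuous.measurable

theorem integrable_mul {μ : Measure E} [μ.HasTemperateGrowth] {p : E → ℝ}
    (hf : DecayingLogConcave f) (hp : p.HasTemperateGrowth) :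
    Integrable (fun x => f x * p x) μ :=
  hf.hasExpDecay.integrable_mul hf.nonneg hf.measurable.aestronglyMeasurable hp

theorem integrable {μ : Measure E} [μ.HasTemperateGrowth] (hf : DecayingLogConcave f) :
    Integrable f μ :=
  hf.hasExpDecay.integrable hf.nonneg hf.measurable.aestronglyMeasurable

end Basic

section Marginal

variable {E V : Type*} [NormedAddCommGroup E] [NormedSpace ℝ E] [NormedAddCommGroup V]
  [NormedSpace ℝ V] {F : E × V → ℝ}

theorem hasExpDecay_slice (hF : DecayingLogConcave F) (x : E) : HasExpDecay fun z => F (x, z) :=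
  hF.hasExpDecay.comp hF.nonneg fun z => (norm_snd_le (x, z)).trans (one_mul _).ge

theorem bddAbove_range_slice (hF : DecayingLogConcave F) (x : E) :
    BddAbove (Set.range fun z => F (x, z)) :=
  hF.bddAbove_range.mono (Set.range_comp_subset_range (fun z => (x, z)) F)

variable [MeasurableSpace V] [BorelSpace V] {μ : Measure V} [μ.HasTemperateGrowth]

theorem measurable_slice (hF : DecayingLogConcave F) (x : E) : Measurable fun z => F (x, z) :=
  (hF.upperSemicontinuous.comp (by fun_prop : Continuous fun z : V => (x, z))).measurable

theorem integrable_slice (hF : DecayingLogConcave F) (x : E) :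
    Integrable (fun z => F (x, z)) μ :=
  (hF.hasExpDecay_slice x).integrable (fun z => hF.nonneg (x, z))
    (hF.measurable_slice x).aestronglyMeasurable

theorem upperSemicontinuous_marginal (hF : DecayingLogConcave F) :
    UpperSemicontinuous fun x => ∫ z, F (x, z) ∂μ := by
  obtain ⟨C, b, hb, hC⟩ := hF.hasExpDecay
  have C_nonneg : 0 ≤ C := by simpa using (hF.nonneg 0).trans (hC 0)
  refine upperSemicontinuous_integral_of_le (g := fun z => C * Real.exp (-(b * ‖z‖)))
    hF.measurable_slice
    (fun z => hF.upperSemicontinuous.comp (by fun_prop : Continuous fun x : E => (x, z)))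
    (fun x z => hF.nonneg (x, z)) (fun x z => (hC (x, z)).trans ?_)
    ((integrable_exp_neg_mul_norm hb).const_mul C)
  gcongr
  exact norm_snd_le (x, z)

theorem hasExpDecay_marginal (hF : DecayingLogConcave F) :
    HasExpDecay fun x => ∫ z, F (x, z) ∂μ := by
  obtain ⟨C, b, hb, hC⟩ := hF.hasExpDecay
  have C_nonneg : 0 ≤ C := by simpa using (hF.nonneg 0).trans (hC 0)
  refine ⟨C * ∫ z, Real.exp (-(b / 2 * ‖z‖)) ∂μ, b / 2, half_pos hb, fun x => ?_⟩
  rw [mul_right_comm, ← integral_const_mul]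
  refine integral_mono (hF.integrable_slice x)
    ((integrable_exp_neg_mul_norm (half_pos hb)).const_mul _) fun z => (hC (x, z)).trans ?_
  rw [mul_assoc, ← Real.exp_add]
  have hx := norm_fst_le (x, z)
  have hz := norm_snd_le (x, z)
  gcongr
  nlinarith

theorem of_logConcave_marginal (hF : DecayingLogConcave F)
    (h : LogConcave fun x => ∫ z, F (x, z) ∂μ) : DecayingLogConcave fun x => ∫ z, F (x, z) ∂μ where
  nonneg x := integral_nonneg fun z => hF.nonneg (x, z)
  logConcave := h
  upperSemicontinuous := hF.upperSemicontinuous_marginal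
  hasExpDecay := hF.hasExpDecay_marginal

end Marginal

section Prekopa

variable {E : Type*} [NormedAddCommGroup E] [NormedSpace ℝ E]

theorem logConcave_integral_real {F : E × ℝ → ℝ} (hF : DecayingLogConcave F) :
    LogConcave fun x => ∫ s, F (x, s) := fun x y a b ha hb hab =>
  prekopa_leindler_real (hF.measurable_slice x) (hF.measurable_slice y)
    (hF.integrable_slice x) (hF.integrable_slice y) (hF.integrable_slice (a • x + b • y))
    (fun s => hF.nonneg (x, s)) (fun s => hF.nonneg (y, s)) (fun _ => hF.nonneg _)
    (hF.bddAbove_range_slice x) (hF.bddAbove_range_slice y) ha hb hab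
    fun s t => hF.logConcave (x := (x, s)) (y := (y, t)) ha hb hab

theorem logConcave_integral_pi (k : ℕ) : ∀ {E : Type*} [NormedAddCommGroup E] [NormedSpace ℝ E]
    {F : E × (Fin k → ℝ) → ℝ}, DecayingLogConcave F → LogConcave fun x => ∫ z, F (x, z) := by
  induction k with
  | zero =>
    intro E _ _ F hF
    have integral_eq (x : E) : ∫ z, F (x, z) = F (x, 0) := by
      rw [volume_pi, Measure.pi_of_empty _ 0, integral_dirac]
    simp only [integral_eq]
    exact hF.logConcave.comp_linearMap (LinearMap.inl ℝ E (Fin 0 → ℝ))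
  | succ k ih =>
    intro E _ _ F hF
    let e : ((E × ℝ) × (Fin k → ℝ)) ≃L[ℝ] E × (Fin (k + 1) → ℝ) :=
      (ContinuousLinearEquiv.prodAssoc ℝ E ℝ (Fin k → ℝ)).trans
        ((ContinuousLinearEquiv.refl ℝ E).prodCongr (Fin.consEquivL ℝ fun _ => ℝ))
    have hFe := hF.comp e.toContinuousLinearMap e.antilipschitz
    have integral_cons (x : E) : ∫ z, F (x, z) = ∫ s, ∫ z, F (e ((x, s), z)) := by
      have mp := (volume_preserving_piFinSuccAbove (fun _ : Fin (k + 1) => ℝ) 0).symm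
      have symm_eq_cons : ⇑(MeasurableEquiv.piFinSuccAbove (fun _ : Fin (k + 1) => ℝ) 0).symm =
          Fin.consEquivL ℝ fun _ => ℝ :=
        congrArg DFunLike.coe (Fin.insertNthEquiv_zero fun _ => ℝ)
      rw [← mp.integral_comp', Measure.volume_eq_prod, integral_prod]
      · simp only [symm_eq_cons]
        rfl
      · exact mp.integrable_comp_of_integrable (hF.integrable_slice x)
    simp only [integral_cons]
    exact (hFe.of_logConcave_marginal (ih hFe)).logConcave_integral_real

theorem logConcave_integral {V : Type*} [NormedAddCommGroup V] [NormedSpace ℝ V]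
    [FiniteDimensional ℝ V] [MeasurableSpace V] [BorelSpace V] {μ : Measure V}
    [μ.IsAddHaarMeasure] {F : E × V → ℝ} (hF : DecayingLogConcave F) :
    LogConcave fun x => ∫ z, F (x, z) ∂μ := by
  let e : (Fin (Module.finrank ℝ V) → ℝ) ≃L[ℝ] V :=
    .ofFinrankEq (Module.finrank_fin_fun ℝ)
  have he : MeasurableEmbedding e := e.toHomeomorph.measurableEmbedding
  let c := Measure.addHaarScalarFactor μ (Measure.map e volume)
  have c_pos : (0 : ℝ) < c := Measure.addHaarScalarFactor_pos_of_isAddHaarMeasure _ _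
  have hμ : μ = c • Measure.map e volume := Measure.isAddLeftInvariant_eq_smul _ _
  have integral_eq (x : E) : ∫ z, F (x, z) ∂μ = c * ∫ s, F (x, e s) := by
    rw [hμ, integral_smul_nnreal_measure, NNReal.smul_def, smul_eq_mul,
      he.integral_map]
  let e' := (ContinuousLinearEquiv.refl ℝ E).prodCongr e
  simp only [integral_eq]
  exact (logConcave_integral_pi _ (hF.comp e'.toContinuousLinearMap e'.antilipschitz)).const_mul
    (fun x => integral_nonneg fun s => hF.nonneg _) c_pos

theorem integral_prod_right {V : Type*} [NormedAddCommGroup V] [NormedSpace ℝ V]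
    [FiniteDimensional ℝ V] [MeasurableSpace V] [BorelSpace V] {μ : Measure V}
    [μ.IsAddHaarMeasure] {F : E × V → ℝ} (hF : DecayingLogConcave F) :
    DecayingLogConcave fun x => ∫ z, F (x, z) ∂μ :=
  hF.of_logConcave_marginal hF.logConcave_integral

end Prekopa

end DecayingLogConcave

section Marginal

variable {E : Type*} [NormedAddCommGroup E] [InnerProductSpace ℝ E] [FiniteDimensional ℝ E]

/-- The splitting `E = Kᗮ ⊕ K`, as a map from the plain product so that Fubini's theorem applies. -/
def orthogonalSplitting (K : Submodule ℝ E) : (Kᗮ × K) ≃L[ℝ] E :=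
  (ContinuousLinearEquiv.prodComm ℝ Kᗮ K).trans
    ((WithLp.prodContinuousLinearEquiv 2 ℝ K Kᗮ).symm.trans
      K.orthogonalDecomposition.symm.toContinuousLinearEquiv)

variable [MeasurableSpace E] [BorelSpace E]

theorem measurePreserving_orthogonalSplitting (K : Submodule ℝ E) :
    MeasurePreserving (orthogonalSplitting K) (volume.prod volume) volume :=
  (K.orthogonalDecomposition.symm.measurePreserving.comp
    (WithLp.volume_preserving_toLp K Kᗮ)).comp Measure.measurePreserving_swap

/-- The marginal of `f` on `Kᗮ`, obtained by integrating over the translates of `K`. -/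
def marginal (K : Submodule ℝ E) (f : E → ℝ) (y : Kᗮ) : ℝ :=
  ∫ z : K, f ((z : E) + (y : E))

theorem DecayingLogConcave.marginal {f : E → ℝ} (hf : DecayingLogConcave f)
    (K : Submodule ℝ E) : DecayingLogConcave (marginal K f) :=
  (hf.comp (orthogonalSplitting K).toContinuousLinearMap
    (orthogonalSplitting K).antilipschitz).integral_prod_right

theorem integral_marginal_mul {K : Submodule ℝ E} {f p : E → ℝ}
    (hp : ∀ z ∈ K, ∀ y, p (z + y) = p y) (hfp : Integrable fun x => f x * p x) :
    ∫ y : Kᗮ, marginal K f y * p y = ∫ x, f x * p x := by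
  have mp := measurePreserving_orthogonalSplitting K
  calc ∫ y : Kᗮ, marginal K f y * p y
      = ∫ y : Kᗮ, ∫ z : K, f ((z : E) + (y : E)) * p ((z : E) + (y : E)) := by
        simp only [marginal, ← integral_mul_const, hp _ (Subtype.prop _)]
    _ = ∫ w, f (orthogonalSplitting K w) * p (orthogonalSplitting K w) ∂volume.prod volume :=
        (integral_prod _ (mp.integrable_comp_of_integrable hfp)).symm
    _ = ∫ x, f x * p x :=
        mp.integral_comp (orthogonalSplitting K).toHomeomorph.measurableEmbedding
          fun x => f x * p x

end Marginal

section Isotropic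

/-- A probability density with barycenter `0` and identity covariance, in coordinate-free form so
that it passes to marginals on subspaces. -/
structure IsIsotropic {E : Type*} [NormedAddCommGroup E] [InnerProductSpace ℝ E]
    [FiniteDimensional ℝ E] [MeasurableSpace E] [BorelSpace E] (f : E → ℝ) : Prop where
  integral_eq_one : ∫ x, f x = 1
  integral_mul_inner : ∀ u, ∫ x, f x * inner ℝ u x = 0
  integral_mul_inner_mul_inner : ∀ u v, ∫ x, f x * (inner ℝ u x * inner ℝ v x) = inner ℝ u v

theorem DecayingLogConcave.isIsotropic {ι : Type*} [Fintype ι] [DecidableEq ι]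
    {f : EuclideanSpace ℝ ι → ℝ} (hf : DecayingLogConcave f) (h_one : ∫ x, f x = 1)
    (h_mean : ∀ i, ∫ x, f x * x i = 0)
    (h_cov : ∀ i j, ∫ x, f x * x i * x j = if i = j then 1 else 0) : IsIsotropic f where
  integral_eq_one := h_one
  integral_mul_inner u := by
    have expand (x : EuclideanSpace ℝ ι) : f x * inner ℝ u x = ∑ i, u i * (f x * x i) := by
      rw [PiLp.inner_apply, Finset.mul_sum]
      simp only [RCLike.inner_apply, conj_trivial]
      exact Finset.sum_congr rfl fun i _ => by ring
    have integrable_term (i : ι) : Integrable fun x => u i * (f x * x i) :=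
      (hf.integrable_mul (EuclideanSpace.proj (𝕜 := ℝ) i).hasTemperateGrowth).const_mul _
    simp only [expand]
    rw [integral_finsetSum _ fun i _ => integrable_term i]
    simp only [integral_const_mul, h_mean, mul_zero, Finset.sum_const_zero]
  integral_mul_inner_mul_inner u v := by
    have expand (x : EuclideanSpace ℝ ι) : f x * (inner ℝ u x * inner ℝ v x) =
        ∑ i, ∑ j, u i * v j * (f x * (x i * x j)) := by
      rw [PiLp.inner_apply, PiLp.inner_apply, Finset.sum_mul_sum]
      simp only [RCLike.inner_apply, conj_trivial, Finset.mul_sum]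
      exact Finset.sum_congr rfl fun i _ => Finset.sum_congr rfl fun j _ => by ring
    have integrable_term (i j : ι) : Integrable fun x => u i * v j * (f x * (x i * x j)) :=
      (hf.integrable_mul ((EuclideanSpace.proj (𝕜 := ℝ) i).hasTemperateGrowth.mul
        (EuclideanSpace.proj (𝕜 := ℝ) j).hasTemperateGrowth)).const_mul _
    have integral_term (i j : ι) :
        ∫ x, u i * v j * (f x * (x i * x j)) = if i = j then u i * v j else 0 := by
      rw [integral_const_mul]
      simp only [← mul_assoc (f _), h_cov, mul_ite, mul_one, mul_zero]
    simp only [expand]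
    rw [integral_finsetSum _ fun i _ => integrable_finsetSum _ fun j _ => integrable_term i j]
    simp only [integral_finsetSum _ fun j _ => integrable_term _ j, integral_term]
    simp [PiLp.inner_apply, mul_comm]

section

variable {E : Type*} [NormedAddCommGroup E] [InnerProductSpace ℝ E] [FiniteDimensional ℝ E]
  [MeasurableSpace E] [BorelSpace E] {f : E → ℝ}

theorem IsIsotropic.marginal (h : IsIsotropic f) (hf : DecayingLogConcave f)
    (K : Submodule ℝ E) : IsIsotropic (marginal K f) where
  integral_eq_one := by
    simpa [h.integral_eq_one] using
      integral_marginal_mul (K := K) (f := f) (p := 1) (fun _ _ _ => rfl)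
        (by simpa using hf.integrable)
  integral_mul_inner u := by
    rw [← h.integral_mul_inner u]
    refine integral_marginal_mul (p := fun x => inner ℝ (u : E) x) (fun z hz y => ?_)
      (hf.integrable_mul (by fun_prop))
    rw [inner_add_right, K.inner_left_of_mem_orthogonal hz u.2, zero_add]
  integral_mul_inner_mul_inner u v := by
    rw [Submodule.coe_inner, ← h.integral_mul_inner_mul_inner u v]
    refine integral_marginal_mul (p := fun x => inner ℝ (u : E) x * inner ℝ (v : E) x)
      (fun z hz y => ?_) (hf.integrable_mul (by fun_prop))
    simp only [inner_add_right, K.inner_left_of_mem_orthogonal hz u.2,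
      K.inner_left_of_mem_orthogonal hz v.2, zero_add]

theorem IsIsotropic.comp_linearIsometryEquiv {F : Type*} [NormedAddCommGroup F]
    [InnerProductSpace ℝ F] [FiniteDimensional ℝ F] [MeasurableSpace F] [BorelSpace F]
    (h : IsIsotropic f) (ψ : F ≃ₗᵢ[ℝ] E) : IsIsotropic fun y => f (ψ y) := by
  have integral_comp (p : E → ℝ) : ∫ y, p (ψ y) = ∫ x, p x :=
    ψ.measurePreserving.integral_comp ψ.toHomeomorph.measurableEmbedding p
  refine ⟨(integral_comp f).trans h.integral_eq_one, fun u => ?_, fun u v => ?_⟩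
  · simp only [← ψ.inner_map_map]
    rw [integral_comp fun x => f x * inner ℝ (ψ u) x, h.integral_mul_inner]
  · simp only [← ψ.inner_map_map]
    rw [integral_comp fun x => f x * (inner ℝ (ψ u) x * inner ℝ (ψ v) x),
      h.integral_mul_inner_mul_inner]

end

variable {d : ℕ} {g : Eucl d → ℝ}

theorem IsIsotropic.covMatrix_eq_one (h : IsIsotropic g) : covMatrix g = 1 := by
  ext i j
  have inner_single (i : Fin d) (x : Eucl d) :
      inner ℝ (EuclideanSpace.single i (1 : ℝ)) x = x i := by
    simp [EuclideanSpace.inner_single_left]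
  have mean (i : Fin d) := h.integral_mul_inner (EuclideanSpace.single i 1)
  have cov := h.integral_mul_inner_mul_inner (EuclideanSpace.single i 1) (EuclideanSpace.single j 1)
  simp only [inner_single, ← mul_assoc] at mean cov
  simp [covMatrix, h.integral_eq_one, mean, cov, Matrix.one_apply]

theorem IsIsotropic.isoConst_eq (h : IsIsotropic g) :
    isoConst g = supNorm g ^ (d : ℝ)⁻¹ := by
  rw [isoConst, h.integral_eq_one, h.covMatrix_eq_one, Matrix.det_one, Real.one_rpow, div_one,
    mul_one, one_div]

theorem IsIsotropic.supNorm_le_pow (h : IsIsotropic g) (hg₀ : ∀ x, 0 ≤ g x) (hd : d ≠ 0) {M : ℝ}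
    (hM : isoConst g ≤ M) : supNorm g ≤ M ^ d := by
  have supNorm_nonneg : 0 ≤ supNorm g := Real.iSup_nonneg hg₀
  rw [h.isoConst_eq] at hM
  calc supNorm g = (supNorm g ^ (d : ℝ)⁻¹) ^ d := (Real.rpow_inv_natCast_pow supNorm_nonneg hd).symm
    _ ≤ M ^ d := by gcongr

end Isotropic

theorem memQ0_iff {n : ℕ} {f : Eucl n → ℝ} : MemQ0 f ↔ DecayingLogConcave f ∧ 0 < ∫ x, f x := by
  refine ⟨fun ⟨hf₀, hf_lc, hf_usc, hf_int, hf_pos⟩ => ?_, fun ⟨hf, hf_pos⟩ =>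
    ⟨hf.nonneg, isLogConcave_iff_logConcave.2 hf.logConcave, hf.upperSemicontinuous,
      hf.integrable, hf_pos⟩⟩
  have hf_lc' := isLogConcave_iff_logConcave.1 hf_lc
  exact ⟨⟨hf₀, hf_lc', hf_usc, hf_lc'.hasExpDecay hf₀ hf_usc hf_int hf_pos⟩, hf_pos⟩

/-- **Lemma 5.3, upper bound**: if `L_g ≤ M` for every `g ∈ Q₀^{n−k}`, then every
log-concave upper semicontinuous probability density `f` on `ℝⁿ` in isotropic
position satisfies `∫_H f dλ_H ≤ M^{n−k}` for every `k`-dimensional subspace `H`. -/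
theorem section_integral_upper_bound (n k : ℕ) (hk1 : 1 ≤ k) (hkn : k < n)
    (M : ℝ) (hM : 0 < M)
    (hbound : ∀ g : Eucl (n - k) → ℝ, MemQ0 g → isoConst g ≤ M)
    (f : Eucl n → ℝ) (hnonneg : ∀ x, 0 ≤ f x) (hlc : IsLogConcave f)
    (husc : UpperSemicontinuous f) (hint : Integrable f)
    (hprob : (∫ x, f x) = 1)
    (hcentered : ∀ i : Fin n, (∫ x, f x * x i) = 0)
    (hisotropic : ∀ i j : Fin n, (∫ x, f x * x i * x j) = if i = j then 1 else 0) :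
    ∀ H : Submodule ℝ (Eucl n), Module.finrank ℝ H = k →
      sectL1 f H ≤ M ^ (n - k) := by
  intro H hH
  have hf : DecayingLogConcave f :=
    (memQ0_iff.1 ⟨hnonneg, hlc, husc, hint, hprob ▸ one_pos⟩).1
  have hf_iso : IsIsotropic f := hf.isIsotropic hprob hcentered hisotropic
  have finrank_orthogonal : Module.finrank ℝ Hᗮ = n - k := by
    have finrank_add := H.finrank_add_finrank_orthogonal
    rw [finrank_euclideanSpace_fin, hH] at finrank_add
    omega
  let ψ : Eucl (n - k) ≃ₗᵢ[ℝ] Hᗮ :=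
    ((stdOrthonormalBasis ℝ Hᗮ).reindex (finCongr finrank_orthogonal)).repr.symm
  let g : Eucl (n - k) → ℝ := fun y => marginal H f (ψ y)
  have hg : DecayingLogConcave g :=
    (hf.marginal H).comp ψ.toContinuousLinearEquiv.toContinuousLinearMap ψ.antilipschitz
  have hg_iso : IsIsotropic g := (hf_iso.marginal hf H).comp_linearIsometryEquiv ψ
  have hgQ : MemQ0 g := memQ0_iff.2 ⟨hg, hg_iso.integral_eq_one ▸ one_pos⟩
  calc sectL1 f H = g 0 := by simp [g, marginal, sectL1]
    _ ≤ supNorm g := le_ciSup hg.bddAbove_range 0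
    _ ≤ M ^ (n - k) := hg_iso.supNorm_le_pow hg.nonneg (Nat.sub_ne_zero_of_lt hkn) (hbound g hgQ)
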